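/- An element A ∈ SL(n,ℍ) satisfies gAg⁻¹ = −A⁻¹ for some g ∈ SL(n,ℍ) if and only if A is conjugate in GL(n,ℍ) to a block-diagonal matrix that is a direct sum of blocks of the following two kinds: pairs J(λ,s) ⊕ J(−λ⁻¹,s) with λ ∈ ℂ \ {0}, Im(λ) ≥ 0 and λ ≠ i, and single blocks J(i,t). -/

import Mathlib

set_option maxHeartbeats 1000000

noncomputable section

open Matrix

/-- The embedding of `ℂ` into the real quaternions, onto the subalgebra spanned by `1` and `i`. -/
def C2H (z : ℂ) : Quaternion ℝ := ⟨z.re, z.im, 0, 0⟩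

/-- For a quaternion `q = a + b i + c j + d k`, its first complex coordinate `a + b i`. -/
def qc1 (q : Quaternion ℝ) : ℂ := ⟨q.re, q.imI⟩

/-- For a quaternion `q = a + b i + c j + d k`, its second complex coordinate `c + d i`,
so that `q = qc1 q + (qc2 q) * j`. -/
def qc2 (q : Quaternion ℝ) : ℂ := ⟨q.imJ, q.imK⟩

/-- The embedding `Φ` of quaternionic square matrices into complex matrices of doubled size:
writing `A = A₁ + A₂ · j`, `Φ A` is the block matrix `[[A₁, A₂], [-conj A₂, conj A₁]]`. -/
def Phi {m : Type*} (A : Matrix m m (Quaternion ℝ)) : Matrix (m ⊕ m) (m ⊕ m) ℂ :=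
  Matrix.fromBlocks (A.map qc1) (A.map qc2)
    (-(A.map fun q => (starRingEnd ℂ) (qc2 q))) (A.map fun q => (starRingEnd ℂ) (qc1 q))

/-- The determinant of a quaternionic matrix `A`: the determinant of `Φ A`.
`A ∈ GL(n, ℍ)` means `qdet A ≠ 0`, and `A ∈ SL(n, ℍ)` means `qdet A = 1`. -/
def qdet {m : Type*} [Fintype m] [DecidableEq m] (A : Matrix m m (Quaternion ℝ)) : ℂ :=
  (Phi A).det

/-- The `m × m` Jordan block `J(λ, m)` over `ℂ`: `λ` on the diagonal, `1` on the
superdiagonal, `0` elsewhere. -/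
def jordanC (lam : ℂ) (m : ℕ) : Matrix (Fin m) (Fin m) ℂ :=
  Matrix.of fun i j => if (j : ℕ) = (i : ℕ) then lam else if (j : ℕ) = (i : ℕ) + 1 then 1 else 0

/-- The `m × m` Jordan block `J(λ, m)`, `λ ∈ ℂ`, viewed as a quaternionic matrix. -/
def jordanH (lam : ℂ) (m : ℕ) : Matrix (Fin m) (Fin m) (Quaternion ℝ) :=
  (jordanC lam m).map C2H

/-- The direct sum (block-diagonal juxtaposition) of a list of square complex matrices. -/
def dsum : List ((m : ℕ) × Matrix (Fin m) (Fin m) ℂ) → (k : ℕ) × Matrix (Fin k) (Fin k) ℂ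
  | [] => ⟨0, 0⟩
  | ⟨m, M⟩ :: L =>
    ⟨m + (dsum L).1,
      Matrix.reindex finSumFinEquiv finSumFinEquiv (Matrix.fromBlocks M 0 0 (dsum L).2)⟩

/-!
The equation `g f g⁻¹ = -f⁻¹` says that `f g f = -g`, and then `t = f - f⁻¹` commutes with `g`. Let
`λ` be an eigenvalue of `f`. As `x - x⁻¹ = λ - λ⁻¹` only for `x = λ` and `x = -λ⁻¹`, the generalized
eigenspace of `t` for the class of `λ - λ⁻¹` is an `f`- and `g`-invariant direct summand on which
the eigenvalues of `f` are `λ`, `-λ⁻¹` and their conjugates. If `λ ≠ i`, this summand splits into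
the primary components of `f` for `λ` and `-λ⁻¹`, which `g` interchanges, carrying the Jordan form
of one to that of the other; this gives the pairs. If `λ = i`, then `λ = -λ⁻¹` and there is only one
component, which gives the single blocks. Conversely, `J(λ, s)` is conjugate to `-J(-λ⁻¹, s)⁻¹` by
an explicit complex triangular matrix, which can be rescaled to have determinant one.

Over `ℝ`, the class of `λ` is cut out by the polynomial `X² - 2 Re(λ) X + |λ|²`; vectors are rows,
so that `ℍ` acts on the left and matrices on the right.
-/

section

local notation "ℍ" => Quaternion ℝ

local notation "Block" => (m : ℕ) × Matrix (Fin m) (Fin m) ℂ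

open Polynomial Module

/-! ### Reindexing and block sums of matrices -/

section Reindex

variable {K ι κ ι' κ' μ ν : Type*}

/-- Square matrices that agree up to a bijection of their index types, such as the sums of the same
blocks taken in different orders. -/
def IsReindexing (M : Matrix ι ι K) (N : Matrix κ κ K) : Prop :=
  ∃ e : ι ≃ κ, reindex e e M = N

namespace IsReindexing

variable {M : Matrix ι ι K} {N : Matrix κ κ K} {P : Matrix μ μ K}

lemma refl (M : Matrix ι ι K) : IsReindexing M M := ⟨Equiv.refl _, rfl⟩

lemma symm (h : IsReindexing M N) : IsReindexing N M := by
  obtain ⟨e, rfl⟩ := h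
  exact ⟨e.symm, by ext; simp⟩

lemma trans (h : IsReindexing M N) (h' : IsReindexing N P) : IsReindexing M P := by
  obtain ⟨e, rfl⟩ := h
  obtain ⟨e', rfl⟩ := h'
  exact ⟨e.trans e', rfl⟩

variable [Zero K]

lemma fromBlocks {M' : Matrix ι' ι' K} {N' : Matrix κ' κ' K} (h : IsReindexing M N)
    (h' : IsReindexing M' N') :
    IsReindexing (.fromBlocks M 0 0 M') (.fromBlocks N 0 0 N') := by
  obtain ⟨e, rfl⟩ := h
  obtain ⟨e', rfl⟩ := h'
  exact ⟨e.sumCongr e', by ext (i | i) (j | j) <;> rfl⟩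

lemma fromBlocks_of_isEmpty [IsEmpty ι] (M : Matrix ι ι K) (N : Matrix κ κ K) :
    IsReindexing (.fromBlocks M 0 0 N) N :=
  ⟨Equiv.emptySum ι κ, rfl⟩

lemma fromBlocks_assoc (M : Matrix ι ι K) (N : Matrix κ κ K) (P : Matrix μ μ K) :
    IsReindexing (.fromBlocks (.fromBlocks M 0 0 N) 0 0 P)
      (.fromBlocks M 0 0 (.fromBlocks N 0 0 P)) :=
  ⟨Equiv.sumAssoc _ _ _, by ext (i | i | i) (j | j | j) <;> rfl⟩

lemma fromBlocks_fromBlocks_comm (M : Matrix ι ι K) (N : Matrix κ κ K) (P : Matrix μ μ K)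
    (Q : Matrix ν ν K) :
    IsReindexing (.fromBlocks (.fromBlocks M 0 0 N) 0 0 (.fromBlocks P 0 0 Q))
      (.fromBlocks (.fromBlocks M 0 0 P) 0 0 (.fromBlocks N 0 0 Q)) :=
  ⟨Equiv.sumSumSumComm _ _ _ _, by ext ((i | i) | i | i) ((j | j) | j | j) <;> rfl⟩

end IsReindexing

end Reindex

lemma isReindexing_dsum_cons {m : ℕ} (M : Matrix (Fin m) (Fin m) ℂ) (L : List Block) :
    IsReindexing (fromBlocks M 0 0 (dsum L).2) (dsum (⟨m, M⟩ :: L)).2 :=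
  ⟨finSumFinEquiv, rfl⟩

lemma isReindexing_dsum_append (L₁ L₂ : List Block) :
    IsReindexing (fromBlocks (dsum L₁).2 0 0 (dsum L₂).2) (dsum (L₁ ++ L₂)).2 := by
  induction L₁ with
  | nil =>
    have : IsEmpty (Fin (dsum []).1) := inferInstanceAs (IsEmpty (Fin 0))
    exact .fromBlocks_of_isEmpty _ _
  | cons b L₁ ih =>
    obtain ⟨m, M⟩ := b
    exact ((isReindexing_dsum_cons M L₁).symm.fromBlocks (.refl _)).trans <|
      (IsReindexing.fromBlocks_assoc _ _ _).trans <|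
        ((IsReindexing.refl M).fromBlocks ih).trans (isReindexing_dsum_cons M (L₁ ++ L₂))

/-- The Jordan blocks with eigenvalue `lam` and the sizes listed in `ss`. -/
def jordanList (lam : ℂ) (ss : List ℕ) : List Block :=
  ss.map fun s => ⟨s, jordanC lam s⟩

/-- The pair `J(λ, s) ⊕ J(-λ⁻¹, s)`, written as in the statement of the theorem. -/
def jordanPair (lam : ℂ) (s : ℕ) : Block :=
  ⟨s + s, reindex finSumFinEquiv finSumFinEquiv
    (fromBlocks (jordanC lam s) 0 0 (jordanC (-lam⁻¹) s))⟩

lemma isReindexing_dsum_map_jordanPair (lam : ℂ) (ss : List ℕ) :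
    IsReindexing
      (fromBlocks (dsum (jordanList lam ss)).2 0 0 (dsum (jordanList (-lam⁻¹) ss)).2)
      (dsum (ss.map (jordanPair lam))).2 := by
  induction ss with
  | nil => exact isReindexing_dsum_append [] []
  | cons s ss ih =>
    exact ((isReindexing_dsum_cons (jordanC lam s) (jordanList lam ss)).symm.fromBlocks
      (isReindexing_dsum_cons (jordanC (-lam⁻¹) s) (jordanList (-lam⁻¹) ss)).symm).trans <|
        (IsReindexing.fromBlocks_fromBlocks_comm _ _ _ _).trans <|
          (IsReindexing.fromBlocks ⟨finSumFinEquiv, rfl⟩ ih).trans <|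
            isReindexing_dsum_cons _ (ss.map (jordanPair lam))

/-! ### Jordan blocks -/

lemma jordanC_apply (lam : ℂ) {m : ℕ} (i j : Fin m) :
    jordanC lam m i j =
      (if (j : ℕ) = i then lam else 0) + if (j : ℕ) = (i : ℕ) + 1 then 1 else 0 := by
  simp only [jordanC, of_apply]
  split_ifs <;> first | omega | simp

section JordanSums

variable {R E : Type*} [Semiring R] [AddCommMonoid E] [Module R E] (φ : ℂ →+* R) (lam : ℂ)
  {m : ℕ} {c : ℕ → E}

lemma sum_jordanC_row_smul (hc : c m = 0) (i : Fin m) :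
    ∑ j : Fin m, φ (jordanC lam m i j) • c j = φ lam • c i + c (i + 1) := by
  have hsucc : (if (i : ℕ) + 1 < m then c (i + 1) else 0) = c (i + 1) := by
    split_ifs with h
    · rfl
    · rw [show (i : ℕ) + 1 = m by omega, hc]
  simp only [jordanC_apply, map_add, apply_ite φ, map_zero, map_one, add_smul, ite_smul, zero_smul,
    one_smul, Finset.sum_add_distrib]
  rw [Fin.sum_univ_eq_sum_range (fun j => if j = (i : ℕ) then φ lam • c j else 0),
    Fin.sum_univ_eq_sum_range (fun j => if j = (i : ℕ) + 1 then c j else 0)]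
  simp [hsucc]

lemma sum_jordanC_col_smul (hc : c 0 = 0) (j : Fin m) :
    ∑ i : Fin m, φ (jordanC lam m i j) • c (i + 1) = φ lam • c (j + 1) + c j := by
  simp only [jordanC_apply, map_add, apply_ite φ, map_zero, map_one, add_smul, ite_smul, zero_smul,
    one_smul, Finset.sum_add_distrib]
  rw [Fin.sum_univ_eq_sum_range (fun i => if (j : ℕ) = i then φ lam • c (i + 1) else 0),
    Fin.sum_univ_eq_sum_range (fun i => if (j : ℕ) = i + 1 then c (i + 1) else 0)]
  rcases hj : (j : ℕ) with _ | k
  · simp [hc, j.pos]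
  · have hk : k + 1 < m := hj ▸ j.isLt
    simp [hk, Nat.lt_of_succ_lt hk]

end JordanSums

/-! ### Matrices conjugate to minus the inverse of another -/

section NegInv

variable {K ι κ ι' κ' : Type*} [CommRing K] [Fintype ι] [Fintype κ] [DecidableEq ι] [DecidableEq κ]
  [Fintype ι'] [Fintype κ'] [DecidableEq ι'] [DecidableEq κ']

/-- `M` is conjugate to `-M'⁻¹`; the equation is multiplied out to `M h M' = -h`, so that no
inverse of a matrix has to be taken. -/
def IsConjNegInv (M : Matrix ι ι K) (M' : Matrix κ κ K) : Prop :=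
  ∃ (h : Matrix ι κ K) (h' : Matrix κ ι K), h * h' = 1 ∧ h' * h = 1 ∧ M * h * M' = -h

namespace IsConjNegInv

variable {M : Matrix ι ι K} {M' : Matrix κ κ K} {N : Matrix ι' ι' K} {N' : Matrix κ' κ' K}

lemma of_isEmpty [IsEmpty ι] [IsEmpty κ] : IsConjNegInv M M' :=
  ⟨0, 0, Subsingleton.elim _ _, Subsingleton.elim _ _, Subsingleton.elim _ _⟩

lemma reindex (H : IsConjNegInv M M') (e : ι ≃ ι') (e' : κ ≃ κ') :
    IsConjNegInv (Matrix.reindex e e M) (Matrix.reindex e' e' M') := by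
  obtain ⟨h, h', hh', hh, hM⟩ := H
  refine ⟨h.submatrix e.symm e'.symm, h'.submatrix e'.symm e.symm, ?_, ?_, ?_⟩
  · rw [submatrix_mul_equiv, hh', submatrix_one_equiv]
  · rw [submatrix_mul_equiv, hh, submatrix_one_equiv]
  · rw [reindex_apply, reindex_apply, submatrix_mul_equiv, submatrix_mul_equiv, hM]
    rfl

lemma fromBlocks (H : IsConjNegInv M M') (H' : IsConjNegInv N N') :
    IsConjNegInv (.fromBlocks M 0 0 N) (.fromBlocks M' 0 0 N') := by
  obtain ⟨h, h', hh', hh, hM⟩ := H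
  obtain ⟨k, k', kk', kk, hN⟩ := H'
  refine ⟨.fromBlocks h 0 0 k, .fromBlocks h' 0 0 k', ?_, ?_, ?_⟩
  · simp [fromBlocks_multiply, hh', kk']
  · simp [fromBlocks_multiply, hh, kk]
  · simp [fromBlocks_multiply, hM, hN, fromBlocks_neg]

lemma fromBlocks_self (H : IsConjNegInv M M') (H' : IsConjNegInv M' M) :
    IsConjNegInv (.fromBlocks M 0 0 M') (.fromBlocks M 0 0 M') := by
  obtain ⟨h, h', hh', hh, hM⟩ := H
  obtain ⟨k, k', kk', kk, hM'⟩ := H'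
  refine ⟨.fromBlocks 0 h k 0, .fromBlocks 0 k' h' 0, ?_, ?_, ?_⟩
  · simp [fromBlocks_multiply, hh', kk']
  · simp [fromBlocks_multiply, hh, kk]
  · simp [fromBlocks_multiply, hM, hM', fromBlocks_neg]

lemma exists_det_eq_one {F : Type*} [Field F] [IsAlgClosed F] {M : Matrix ι ι F}
    (H : IsConjNegInv M M) :
    ∃ h : Matrix ι ι F, h.det = 1 ∧ M * h * M = -h := by
  obtain ⟨h, h', hh', -, hM⟩ := H
  have hdet : h.det ≠ 0 := det_ne_zero_of_right_inverse hh'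
  rcases isEmpty_or_nonempty ι with hι | hι
  · exact ⟨h, det_isEmpty, hM⟩
  · obtain ⟨c, hc⟩ := IsAlgClosed.exists_pow_nat_eq h.det⁻¹ (Fintype.card_pos (α := ι))
    refine ⟨c • h, ?_, ?_⟩
    · rw [det_smul, hc, inv_mul_cancel₀ hdet]
    · rw [Matrix.mul_smul, Matrix.smul_mul, hM, smul_neg]

end IsConjNegInv

end NegInv

/-- The coefficient of `X ^ j` in the power series `(λ²X / (1 - λX)) ^ i`. Writing
`σ = λ²X / (1 - λX)`, one has `(λ + σ)(-λ⁻¹ + X) = -1`, so substituting `σ` for `X` intertwines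
multiplication by `λ + X`, whose matrix is `J(λ, s)`, with multiplication by minus the inverse of
`-λ⁻¹ + X`. -/
def moebiusCoeff (lam : ℂ) : ℕ → ℕ → ℂ
  | 0, 0 => 1
  | _ + 1, 0 => 0
  | 0, _ + 1 => 0
  | i + 1, j + 1 => lam * (lam * moebiusCoeff lam i j + moebiusCoeff lam (i + 1) j)

lemma moebiusCoeff_of_lt (lam : ℂ) : ∀ {i j : ℕ}, j < i → moebiusCoeff lam i j = 0
  | _ + 1, 0, _ => by rw [moebiusCoeff]
  | i + 1, j + 1, hij => by
    rw [moebiusCoeff, moebiusCoeff_of_lt lam (Nat.lt_of_succ_lt_succ hij),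
      moebiusCoeff_of_lt lam (Nat.lt_of_succ_lt hij)]
    ring

lemma moebiusCoeff_self_ne_zero {lam : ℂ} (hlam : lam ≠ 0) : ∀ i, moebiusCoeff lam i i ≠ 0
  | 0 => by simp [moebiusCoeff]
  | i + 1 => by
    rw [moebiusCoeff, moebiusCoeff_of_lt lam (Nat.lt_succ_self i), add_zero]
    exact mul_ne_zero hlam (mul_ne_zero hlam (moebiusCoeff_self_ne_zero hlam i))

lemma isConjNegInv_jordanC {lam : ℂ} (hlam : lam ≠ 0) (s : ℕ) :
    IsConjNegInv (jordanC lam s) (jordanC (-lam⁻¹) s) := by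
  let h : Matrix (Fin s) (Fin s) ℂ := of fun i j => moebiusCoeff lam i j
  have hdet : IsUnit h.det := by
    have htri : h.IsUpperTriangular := fun i j hij => moebiusCoeff_of_lt lam hij
    rw [det_of_isUpperTriangular htri, isUnit_iff_ne_zero, Finset.prod_ne_zero_iff]
    exact fun i _ => moebiusCoeff_self_ne_zero hlam i
  refine ⟨h, h⁻¹, mul_nonsing_inv h hdet, nonsing_inv_mul h hdet, ?_⟩
  have hrow (i j : Fin s) : (jordanC lam s * h) i j =
      lam * moebiusCoeff lam i j + moebiusCoeff lam (i + 1) j :=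
    sum_jordanC_row_smul (RingHom.id ℂ) lam (c := fun k => moebiusCoeff lam k j)
      (moebiusCoeff_of_lt lam j.isLt) i
  ext i j
  let c (k : ℕ) : ℂ := lam⁻¹ * moebiusCoeff lam (i + 1) k
  have hc (k : ℕ) : c (k + 1) = lam * moebiusCoeff lam i k + moebiusCoeff lam (i + 1) k := by
    simp only [c, moebiusCoeff, inv_mul_cancel_left₀ hlam]
  calc
    (jordanC lam s * h * jordanC (-lam⁻¹) s) i j
      = ∑ k : Fin s, RingHom.id ℂ (jordanC (-lam⁻¹) s k j) • c (k + 1) := by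
        rw [mul_apply]
        exact Finset.sum_congr rfl fun k _ => by
          rw [hrow, ← hc, RingHom.id_apply, smul_eq_mul, mul_comm]
    _ = -lam⁻¹ * c (j + 1) + c j :=
        sum_jordanC_col_smul (RingHom.id ℂ) (-lam⁻¹) (by simp [c, moebiusCoeff]) j
    _ = (-h) i j := by
        rw [hc, Matrix.neg_apply]
        simp only [c, h, of_apply]
        field_simp
        ring

lemma isConjNegInv_dsum_jordanList {lam : ℂ} (hlam : lam ≠ 0) (ss : List ℕ) :
    IsConjNegInv (dsum (jordanList lam ss)).2 (dsum (jordanList (-lam⁻¹) ss)).2 := by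
  induction ss with
  | nil => exact .of_isEmpty (ι := Fin 0) (κ := Fin 0)
  | cons s ss ih => exact ((isConjNegInv_jordanC hlam s).fromBlocks ih).reindex _ _

/-- The blocks allowed in the normal form: pairs `J(λ, s) ⊕ J(-λ⁻¹, s)` with `λ ≠ i` in the closed
upper half plane, and single blocks `J(i, t)`. -/
def IsAdmissibleBlock (b : Block) : Prop :=
  (∃ (s : ℕ) (lam : ℂ), 1 ≤ s ∧ lam ≠ 0 ∧ 0 ≤ lam.im ∧ lam ≠ Complex.I ∧
    b = jordanPair lam s) ∨
  (∃ t : ℕ, 1 ≤ t ∧ b = ⟨t, jordanC Complex.I t⟩)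

lemma IsAdmissibleBlock.isConjNegInv {b : Block} (hb : IsAdmissibleBlock b) :
    IsConjNegInv b.2 b.2 := by
  rcases hb with ⟨s, lam, -, hlam, -, -, rfl⟩ | ⟨t, -, rfl⟩
  · have hmu : -lam⁻¹ ≠ 0 := neg_ne_zero.2 (inv_ne_zero hlam)
    have hback : IsConjNegInv (jordanC (-lam⁻¹) s) (jordanC lam s) := by
      simpa only [inv_neg, inv_inv, neg_neg] using isConjNegInv_jordanC hmu s
    exact ((isConjNegInv_jordanC hlam s).fromBlocks_self hback).reindex _ _
  · simpa only [Complex.inv_I, neg_neg] using isConjNegInv_jordanC Complex.I_ne_zero t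

lemma isConjNegInv_dsum {L : List Block} (hL : ∀ b ∈ L, IsConjNegInv b.2 b.2) :
    IsConjNegInv (dsum L).2 (dsum L).2 := by
  induction L with
  | nil => exact .of_isEmpty (ι := Fin 0) (κ := Fin 0)
  | cons b L ih =>
    rw [List.forall_mem_cons] at hL
    exact (hL.1.fromBlocks (ih hL.2)).reindex _ _

/-! ### Complex matrices of endomorphisms -/

section HasMatrix

variable {D V W ι κ : Type*} [Ring D] {φ : ℂ →+* D} [AddCommGroup V] [Module D V]
  [AddCommGroup W] [Module D W] [Fintype ι] [Fintype κ] {f : V →ₗ[D] V} {M : Matrix ι ι ℂ}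
  {N : Matrix κ κ ℂ}

/-- In some basis, the endomorphism `f` is given by the complex matrix `M`, whose entries are
scalars of `D` through `φ`. As `V` is a left module, coordinates are row vectors: the coordinates of
`f (b i)` form the `i`-th row of `M`. -/
def HasMatrix (φ : ℂ →+* D) (f : V →ₗ[D] V) (M : Matrix ι ι ℂ) : Prop :=
  ∃ b : Basis ι D V, ∀ i, f (b i) = ∑ j, φ (M i j) • b j

lemma hasMatrix_iff_exists_linearEquiv :
    HasMatrix φ f M ↔ ∃ e : (ι → D) ≃ₗ[D] V, ∀ x, f (e x) = e (x ᵥ* M.map φ) := by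
  constructor
  · rintro ⟨b, hb⟩
    refine ⟨b.equivFun.symm, fun x => ?_⟩
    simp only [Basis.equivFun_symm_apply, map_sum, map_smul, hb, Finset.smul_sum, smul_smul,
      vecMul, dotProduct, map_apply, Finset.sum_smul]
    exact Finset.sum_comm
  · classical
    rintro ⟨e, he⟩
    refine ⟨Basis.ofEquivFun e.symm, fun i => ?_⟩
    rw [← Basis.equivFun_symm_apply, Basis.equivFun_ofEquivFun, Basis.coe_ofEquivFun,
      LinearEquiv.symm_symm]
    beta_reduce
    rw [he, single_one_vecMul]
    rfl

lemma hasMatrix_of_isEmpty [IsEmpty ι] [Subsingleton V] : HasMatrix φ f M :=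
  ⟨Basis.empty V, isEmptyElim⟩

namespace HasMatrix

lemma of_isReindexing (hf : HasMatrix φ f M) (hMN : IsReindexing M N) : HasMatrix φ f N := by
  obtain ⟨b, hb⟩ := hf
  obtain ⟨e, rfl⟩ := hMN
  refine ⟨b.reindex e, fun i => ?_⟩
  rw [Basis.reindex_apply, hb, ← Equiv.sum_comp e]
  simp

lemma fromBlocks {p q : Submodule D V} (hpq : IsCompl p q) (hp : ∀ x ∈ p, f x ∈ p)
    (hq : ∀ x ∈ q, f x ∈ q) (hM : HasMatrix φ (f.restrict hp) M)
    (hN : HasMatrix φ (f.restrict hq) N) : HasMatrix φ f (.fromBlocks M 0 0 N) := by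
  obtain ⟨b, hb⟩ := hM
  obtain ⟨c, hc⟩ := hN
  replace hb (i) := congrArg Subtype.val (hb i)
  replace hc (i) := congrArg Subtype.val (hc i)
  simp only [LinearMap.coe_restrict_apply, Submodule.coe_sum, Submodule.coe_smul] at hb hc
  refine ⟨(b.prod c).map (Submodule.prodEquivOfIsCompl p q hpq), ?_⟩
  rintro (i | i)
  · simp [Basis.prod_apply, hb]
  · simp [Basis.prod_apply, hc]

/-- With `f x = e (x M)`, the relation `M' h M = -h` makes `x ↦ g (e (x h))` a coordinate system in
which `f'` has the matrix `M'`. -/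
lemma of_isConjNegInv [DecidableEq ι] [DecidableEq κ] (hM : HasMatrix φ f M)
    (hNM : IsConjNegInv N M) {f' : W →ₗ[D] W} (g : V ≃ₗ[D] W) (hg : ∀ v, f' (g (f v)) = -g v) :
    HasMatrix φ f' N := by
  rw [hasMatrix_iff_exists_linearEquiv] at hM ⊢
  obtain ⟨e, he⟩ := hM
  obtain ⟨h, h', hh', hh, hNhM⟩ := hNM
  let H : (κ → D) ≃ₗ[D] (ι → D) := Matrix.toLinearEquivRight'OfInv (M := h'.map φ) (M' := h.map φ)
    (by rw [← Matrix.map_mul, hh, Matrix.map_one _ (map_zero φ) (map_one φ)])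
    (by rw [← Matrix.map_mul, hh', Matrix.map_one _ (map_zero φ) (map_one φ)])
  refine ⟨(H.trans e).trans g, fun x => ?_⟩
  have hH (y : κ → D) : (H.trans e).trans g y = g (e (y ᵥ* h.map φ)) := rfl
  have hf : f (e (x ᵥ* N.map φ ᵥ* h.map φ)) = -e (x ᵥ* h.map φ) := by
    rw [he, vecMul_vecMul, vecMul_vecMul, ← Matrix.map_mul, ← Matrix.map_mul, ← Matrix.mul_assoc,
      hNhM, Matrix.map_neg (f := φ) (hf := map_neg φ), vecMul_neg, map_neg]
  have hg' := hg (e (x ᵥ* N.map φ ᵥ* h.map φ))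
  rw [hf, map_neg, map_neg, neg_inj] at hg'
  rw [hH, hH, hg']

end HasMatrix

end HasMatrix

/-! ### Jordan form of an endomorphism with one eigenvalue -/

lemma isCompl_range_ker_of_bijective {R E V E' : Type*} [Ring R] [AddCommGroup E] [Module R E]
    [AddCommGroup V] [Module R V] [AddCommGroup E'] [Module R E'] {f : E →ₗ[R] V} {g : V →ₗ[R] E'}
    (h : Function.Bijective (g ∘ₗ f)) : IsCompl (LinearMap.range f) (LinearMap.ker g) := by
  rw [isCompl_iff, Submodule.disjoint_def, codisjoint_iff_le_sup]
  constructor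
  · rintro _ ⟨x, rfl⟩ hx
    rw [h.injective ((LinearMap.mem_ker.1 hx).trans (map_zero (g ∘ₗ f)).symm), map_zero]
  · intro v _
    obtain ⟨x, hx⟩ := h.surjective (g v)
    rw [← add_sub_cancel (f x) v]
    refine Submodule.add_mem_sup ⟨x, rfl⟩ ?_
    rw [LinearMap.mem_ker, map_sub, sub_eq_zero]
    exact hx.symm

section Nilpotent

variable {D V : Type*} [DivisionRing D] [AddCommGroup V] [Module D V]

lemma exists_linearMap_apply_eq_one {v : V} (hv : v ≠ 0) : ∃ ψ : V →ₗ[D] D, ψ v = 1 := by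
  obtain ⟨ψ, hψ⟩ := (LinearMap.toSpanSingleton D V v).exists_leftInverse_of_injective
    (LinearMap.ker_toSpanSingleton D hv)
  exact ⟨ψ, by simpa using LinearMap.congr_fun hψ 1⟩

/-- The system `ψ (N ^ m (∑ i, a i • N ^ i v)) = 0` is triangular with unit diagonal. -/
lemma eq_zero_of_apply_pow_sum_eq_zero {N : V →ₗ[D] V} {k : ℕ} (hN : N ^ (k + 1) = 0) {v : V}
    {ψ : V →ₗ[D] D} (hψ : ψ ((N ^ k) v) = 1) {a : Fin (k + 1) → D}
    (ha : ∀ m : Fin (k + 1), ψ ((N ^ (m : ℕ)) (∑ i, a i • (N ^ (i : ℕ)) v)) = 0) : a = 0 := by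
  funext n
  induction n using Fin.strong_induction_on with | _ n ih =>
  have hsum := ha ⟨k - n, by omega⟩
  simp only [map_sum, map_smul, ← Module.End.mul_apply, ← pow_add] at hsum
  rw [Finset.sum_eq_single n] at hsum
  · simpa [show k - (n : ℕ) + n = k by omega, hψ] using hsum
  · intro i _ hin
    rcases lt_or_gt_of_ne hin with hlt | hgt
    · simp [ih i hlt]
    · rw [pow_eq_zero_of_le (show k + 1 ≤ k - n + i by omega) hN]
      simp
  · simp

lemma apply_mem_range_linearCombination_pow {N : V →ₗ[D] V} {k : ℕ} (hN : N ^ k = 0) (v : V) :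
    ∀ x ∈ LinearMap.range (Fintype.linearCombination D fun i : Fin k => (N ^ (i : ℕ)) v),
      N x ∈ LinearMap.range (Fintype.linearCombination D fun i : Fin k => (N ^ (i : ℕ)) v) := by
  have mem_range (m : ℕ) : (N ^ m) v ∈
      LinearMap.range (Fintype.linearCombination D fun i : Fin k => (N ^ (i : ℕ)) v) := by
    by_cases hm : m < k
    · exact ⟨Pi.single ⟨m, hm⟩ 1, by simp⟩
    · simp [pow_eq_zero_of_le (not_lt.1 hm) hN]
  rintro _ ⟨a, rfl⟩
  simp only [Fintype.linearCombination_apply, map_sum, map_smul, ← Module.End.mul_apply,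
    ← pow_succ']
  exact Submodule.sum_mem _ fun i _ => Submodule.smul_mem _ _ (mem_range (i + 1))

lemma apply_mem_ker_pi_pow {N : V →ₗ[D] V} {k : ℕ} (hN : N ^ k = 0) (ψ : V →ₗ[D] D) :
    ∀ x ∈ LinearMap.ker (LinearMap.pi fun m : Fin k => ψ ∘ₗ (N ^ (m : ℕ))),
      N x ∈ LinearMap.ker (LinearMap.pi fun m : Fin k => ψ ∘ₗ (N ^ (m : ℕ))) := by
  have mem_ker {x : V} : x ∈ LinearMap.ker (LinearMap.pi fun m : Fin k => ψ ∘ₗ (N ^ (m : ℕ))) ↔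
      ∀ m, ψ ((N ^ m) x) = 0 := by
    refine ⟨fun hx m => ?_, fun hx => funext fun m => hx m⟩
    by_cases hm : m < k
    · exact congrFun hx ⟨m, hm⟩
    · simp [pow_eq_zero_of_le (not_lt.1 hm) hN]
  simp only [mem_ker, ← Module.End.mul_apply, ← pow_succ]
  exact fun x hx m => hx (m + 1)

lemma exists_isCompl_pow_basis [Nontrivial V] {N : V →ₗ[D] V} (hN : IsNilpotent N) :
    ∃ (k : ℕ) (v : V) (p q : Submodule D V) (b : Basis (Fin (k + 1)) D p),
      IsCompl p q ∧ (∀ x ∈ p, N x ∈ p) ∧ (∀ x ∈ q, N x ∈ q) ∧ N ^ (k + 1) = 0 ∧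
        ∀ i, (b i : V) = (N ^ (i : ℕ)) v := by
  obtain ⟨k, hk⟩ := Nat.exists_eq_succ_of_ne_zero (pos_nilpotencyClass_iff.2 hN).ne'
  obtain ⟨hNk, hNk'⟩ := nilpotencyClass_eq_succ_iff.1 hk
  obtain ⟨v, hv⟩ : ∃ v, (N ^ k) v ≠ 0 := DFunLike.ne_iff.1 hNk'
  obtain ⟨ψ, hψ⟩ := exists_linearMap_apply_eq_one (D := D) hv
  let C : (Fin (k + 1) → D) →ₗ[D] V :=
    Fintype.linearCombination D fun i : Fin (k + 1) => (N ^ (i : ℕ)) v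
  let Ψ : V →ₗ[D] Fin (k + 1) → D := LinearMap.pi fun m => ψ ∘ₗ (N ^ (m : ℕ))
  have hinj : Function.Injective (Ψ ∘ₗ C) := by
    rw [← LinearMap.ker_eq_bot, LinearMap.ker_eq_bot']
    exact fun a ha => eq_zero_of_apply_pow_sum_eq_zero hNk hψ fun m => congrFun ha m
  have hC : Function.Injective C := .of_comp (f := Ψ) hinj
  have hbij : Function.Bijective (Ψ ∘ₗ C) := ⟨hinj, LinearMap.injective_iff_surjective.1 hinj⟩
  exact ⟨k, v, LinearMap.range C, LinearMap.ker Ψ,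
    .ofEquivFun (LinearEquiv.ofInjective C hC).symm, isCompl_range_ker_of_bijective hbij,
    apply_mem_range_linearCombination_pow hNk v, apply_mem_ker_pi_pow hNk ψ, hNk,
    fun i => by simp [C]⟩

end Nilpotent

section JordanForm

variable {D : Type*} [DivisionRing D]

theorem exists_hasMatrix_jordanList {V : Type*} [AddCommGroup V] [Module D V] [Module.Finite D V]
    (φ : ℂ →+* D) (lam : ℂ) {f N : V →ₗ[D] V} (hN : IsNilpotent N)
    (hf : ∀ v, f v = φ lam • v + N v) :
    ∃ ss : List ℕ, (∀ s ∈ ss, 1 ≤ s) ∧ HasMatrix φ f (dsum (jordanList lam ss)).2 := by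
  induction h : finrank D V using Nat.strong_induction_on generalizing V with | _ d ih =>
  rcases subsingleton_or_nontrivial V with hV | hV
  · exact ⟨[], by simp, hasMatrix_of_isEmpty (ι := Fin 0)⟩
  obtain ⟨k, v, p, q, b, hpq, hp, hq, hNk, hb⟩ := exists_isCompl_pow_basis hN
  have hinv {r : Submodule D V} (hr : ∀ x ∈ r, N x ∈ r) : ∀ x ∈ r, f x ∈ r := fun x hx =>
    hf x ▸ r.add_mem (r.smul_mem _ hx) (hr x hx)
  have hdim : finrank D q < d := by
    have := Submodule.finrank_add_eq_of_isCompl hpq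
    rw [finrank_eq_card_basis b, Fintype.card_fin] at this
    omega
  have hqN : IsNilpotent (N.restrict hq) :=
    ⟨k + 1, by rw [Module.End.pow_restrict]; ext; simp [LinearMap.restrict_apply, hNk]⟩
  obtain ⟨ss, hss, hmat⟩ := ih _ hdim hqN (f := f.restrict (hinv hq))
    (fun x => Subtype.ext (hf x)) rfl
  refine ⟨(k + 1) :: ss, by simpa using hss, ?_⟩
  have hchain : HasMatrix φ (f.restrict (hinv hp)) (jordanC lam (k + 1)) := by
    refine ⟨b, fun i => Subtype.ext ?_⟩
    have hsum := sum_jordanC_row_smul φ lam (c := fun i => (N ^ i) v) (m := k + 1) (by simp [hNk]) i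
    simp only [LinearMap.coe_restrict_apply, Submodule.coe_sum, Submodule.coe_smul, hb, hsum, hf,
      pow_succ', Module.End.mul_apply]
  exact (hchain.fromBlocks hpq _ _ hmat).of_isReindexing (isReindexing_dsum_cons _ _)

end JordanForm

/-! ### Real quadratic factors -/

section RealQuadratic

open ComplexConjugate

/-- The real polynomial `(X - z) (X - z̄)`. -/
def realQuadratic (z : ℂ) : ℝ[X] :=
  X ^ 2 - C (2 * z.re) * X + C (Complex.normSq z)

lemma C_two_mul_re (z : ℂ) : (C ((2 * z.re : ℝ) : ℂ) : ℂ[X]) = C z + C (conj z) := by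
  rw [← C_add, Complex.add_conj]

lemma C_normSq (z : ℂ) : (C (Complex.normSq z : ℂ) : ℂ[X]) = C z * C (conj z) := by
  rw [← C_mul, Complex.mul_conj]

lemma map_realQuadratic (z : ℂ) :
    (realQuadratic z).map (algebraMap ℝ ℂ) = (X - C z) * (X - C (conj z)) := by
  simp only [realQuadratic, Polynomial.map_add, Polynomial.map_sub, Polynomial.map_mul,
    Polynomial.map_pow, map_X, map_C, Complex.coe_algebraMap, C_two_mul_re, C_normSq]
  ring

lemma isCoprime_realQuadratic {z w : ℂ} (hzw : z ≠ w) (hzw' : z ≠ conj w) :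
    IsCoprime (realQuadratic z) (realQuadratic w) := by
  have hcop {a b : ℂ} (hab : a ≠ b) : IsCoprime (X - C a) (X - C b) :=
    isCoprime_X_sub_C_of_isUnit_sub (sub_ne_zero.2 hab).isUnit
  rw [← isCoprime_map (algebraMap ℝ ℂ), map_realQuadratic, map_realQuadratic]
  refine .mul_left (.mul_right (hcop hzw) (hcop hzw')) (.mul_right (hcop ?_) (hcop ?_))
  · exact fun h => hzw' (by rw [← h, Complex.conj_conj])
  · exact fun h => hzw ((starRingEnd ℂ).injective h)

lemma isCoprime_realQuadratic_neg_inv {lam : ℂ} (h₀ : lam ≠ 0) (him : 0 ≤ lam.im)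
    (hI : lam ≠ Complex.I) : IsCoprime (realQuadratic lam) (realQuadratic (-lam⁻¹)) := by
  apply isCoprime_realQuadratic
  · intro h
    have hsq : lam ^ 2 = Complex.I ^ 2 := by
      rw [Complex.I_sq, sq]
      nth_rw 2 [h]
      rw [mul_neg, mul_inv_cancel₀ h₀]
    rcases sq_eq_sq_iff_eq_or_eq_neg.1 hsq with h | h
    · exact hI h
    · norm_num [h] at him
  · intro h
    have hnorm : (Complex.normSq lam : ℂ) = (-1 : ℝ) := by
      rw [← Complex.mul_conj]
      nth_rw 2 [h]
      rw [Complex.conj_conj, mul_neg, mul_inv_cancel₀ h₀, Complex.ofReal_neg, Complex.ofReal_one]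
    linarith [Complex.ofReal_injective hnorm, Complex.normSq_nonneg lam]

lemma realQuadratic_mul_neg_inv {lam : ℂ} (h₀ : lam ≠ 0) :
    realQuadratic lam * realQuadratic (-lam⁻¹) =
      (X ^ 2 - 1) ^ 2 - C (2 * (lam - lam⁻¹).re) * (X * (X ^ 2 - 1)) +
        C (Complex.normSq (lam - lam⁻¹)) * X ^ 2 := by
  apply map_injective (algebraMap ℝ ℂ) Complex.ofReal_injective
  have hmul : (C lam * C (-lam⁻¹) : ℂ[X]) = -1 := by
    rw [← C_mul, mul_neg, mul_inv_cancel₀ h₀, C_neg, C_1]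
  have hmul' : (C (conj lam) * C (conj (-lam⁻¹)) : ℂ[X]) = -1 := by
    rw [← C_mul, ← map_mul, mul_neg, mul_inv_cancel₀ h₀, map_neg, map_one, C_neg, C_1]
  simp only [Polynomial.map_mul, map_realQuadratic, Polynomial.map_add, Polynomial.map_sub,
    Polynomial.map_pow, map_X, Polynomial.map_one, map_C, Complex.coe_algebraMap, C_two_mul_re,
    C_normSq, sub_eq_add_neg lam, map_add]
  linear_combination
    (X ^ 2 - (C (conj lam) + C (conj (-lam⁻¹))) * X + C (conj lam) * C (conj (-lam⁻¹))) * hmul +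
      (X ^ 2 - (C lam + C (-lam⁻¹)) * X - 1) * hmul'

variable {A : Type*} [Ring A] [Algebra ℝ A]

lemma aeval_realQuadratic (a : A) (z : ℂ) :
    aeval a (realQuadratic z) = a ^ 2 - (2 * z.re) • a + Complex.normSq z • 1 := by
  simp [realQuadratic, Algebra.smul_def]

lemma aeval_sub_inv_mul_sq (u : Aˣ) {lam : ℂ} (h₀ : lam ≠ 0) :
    aeval (u - ↑u⁻¹ : A) (realQuadratic (lam - lam⁻¹)) * (u : A) ^ 2 =
      aeval (u : A) (realQuadratic lam * realQuadratic (-lam⁻¹)) := by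
  set t : A := u - ↑u⁻¹ with ht
  have hcomm : Commute t u := .sub_left (.refl _) (Units.commute_inv_coe u)
  have hsq : (u : A) ^ 2 - 1 = t * u := by rw [ht, sub_mul, Units.inv_mul, sq]
  have hcube : (u : A) * (t * u) = t * (u : A) ^ 2 := by rw [sq, ← mul_assoc, ← mul_assoc, hcomm.eq]
  simp only [realQuadratic_mul_neg_inv h₀, aeval_realQuadratic, map_add, map_sub, map_mul, map_pow,
    aeval_X, aeval_C, map_one, hsq, hcube, hcomm.mul_pow, Algebra.smul_def, add_mul, sub_mul,
    mul_one, mul_assoc]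

lemma aeval_neg_inv_mul_smul_sq (u : Aˣ) {lam : ℂ} (h₀ : lam ≠ 0) :
    aeval (-↑u⁻¹ : A) (realQuadratic (-lam⁻¹)) * (Complex.normSq lam • (u : A) ^ 2) =
      aeval (u : A) (realQuadratic lam) := by
  have hn : Complex.normSq lam ≠ 0 := Complex.normSq_eq_zero.not.2 h₀
  have hre : (-lam⁻¹).re = -((Complex.normSq lam)⁻¹ * lam.re) := by
    rw [Complex.neg_re, Complex.inv_re, div_eq_inv_mul]
  have hlin : (↑u⁻¹ : A) * (u : A) ^ 2 = u := by rw [sq, Units.inv_mul_cancel_left]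
  have hsq : (↑u⁻¹ : A) ^ 2 * (u : A) ^ 2 = 1 := by rw [sq, mul_assoc, hlin, Units.inv_mul]
  rw [aeval_realQuadratic, aeval_realQuadratic, Complex.normSq_neg, Complex.normSq_inv, hre]
  simp only [neg_sq, smul_neg, add_mul, sub_mul, neg_mul, smul_mul_assoc, mul_smul_comm, hlin, hsq,
    one_mul, smul_add, smul_sub, smul_smul]
  match_scalars <;> field_simp

end RealQuadratic

/-! ### Polynomials in endomorphisms -/

section Aeval

variable {K D D' V W : Type*} [CommRing K] [Ring D] [Ring D'] [AddCommGroup V] [AddCommGroup W]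
  [Module K V] [Module D V] [SMul K D] [IsScalarTower K D V] [SMulCommClass D K V]
  [Module K W] [Module D' W] [SMul K D'] [IsScalarTower K D' W] [SMulCommClass D' K W]

/-- The endomorphisms may be linear over different rings, such as `ℍ` and `ℂ`. -/
lemma map_aeval_apply (h : V →ₗ[K] W) {f : V →ₗ[D] V} {f' : W →ₗ[D'] W}
    (hf : ∀ v, h (f v) = f' (h v)) (p : K[X]) (v : V) :
    h (aeval f p v) = aeval f' p (h v) := by
  induction p using Polynomial.induction_on' generalizing v with
  | add p q hp hq => simp [hp, hq]
  | monomial n a =>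
    have hpow : h ((f ^ n) v) = (f' ^ n) (h v) := by
      induction n generalizing v with
      | zero => simp
      | succ n ih => rw [pow_succ, pow_succ, Module.End.mul_apply, ih, hf, Module.End.mul_apply]
    simp [aeval_monomial, hpow]

lemma coe_aeval_restrict {f : V →ₗ[D] V} {p : Submodule D V} (hp : ∀ x ∈ p, f x ∈ p) (P : K[X])
    (x : p) : (aeval (f.restrict hp) P x : V) = aeval f P (x : V) :=
  map_aeval_apply (p.subtype.restrictScalars K) (fun _ => rfl) P x

lemma aeval_restrict_eq_zero {f : V →ₗ[D] V} {p : Submodule D V} (hp : ∀ x ∈ p, f x ∈ p) {P : K[X]}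
    (h : ∀ x ∈ p, aeval f P x = 0) : aeval (f.restrict hp) P = 0 :=
  LinearMap.ext fun x => Subtype.ext ((coe_aeval_restrict hp P x).trans (h x x.2))

lemma isCompl_ker_aeval_of_isCoprime {f : V →ₗ[D] V} {p q : K[X]} (hpq : IsCoprime p q)
    (h0 : aeval f (p * q) = 0) :
    IsCompl (LinearMap.ker (aeval f p)) (LinearMap.ker (aeval f q)) := by
  obtain ⟨a, b, hab⟩ := hpq
  have hsum (v : V) : aeval f (a * p) v + aeval f (b * q) v = v := by
    rw [← LinearMap.add_apply, ← map_add, hab, map_one, Module.End.one_apply]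
  have hzero {r s t : K[X]} (h : r * s = t * (p * q)) (v : V) : aeval f r (aeval f s v) = 0 := by
    rw [← Module.End.mul_apply, ← map_mul, h, map_mul, h0, mul_zero, LinearMap.zero_apply]
  rw [isCompl_iff, Submodule.disjoint_def, codisjoint_iff_le_sup]
  constructor
  · intro v hp hq
    rw [← hsum v, map_mul, map_mul, Module.End.mul_apply, Module.End.mul_apply,
      LinearMap.mem_ker.1 hp, LinearMap.mem_ker.1 hq, map_zero, map_zero, add_zero]
  · intro v _
    rw [← hsum v, add_comm]
    exact Submodule.add_mem_sup (hzero (t := b) (by ring) v) (hzero (t := a) (by ring) v)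

end Aeval

section Commute

variable {R V : Type*} [Semiring R] [AddCommMonoid V] [Module R V] {f g : V →ₗ[R] V}

lemma apply_mem_ker_of_commute (h : Commute f g) : ∀ x ∈ LinearMap.ker g, f x ∈ LinearMap.ker g :=
  fun x hx => (LinearMap.congr_fun h.eq x).symm.trans ((congrArg f hx).trans (map_zero f))

lemma apply_mem_range_of_commute (h : Commute f g) :
    ∀ x ∈ LinearMap.range g, f x ∈ LinearMap.range g := by
  rintro _ ⟨x, rfl⟩
  exact ⟨f x, (LinearMap.congr_fun h.eq x).symm⟩

end Commute

lemma commute_aeval {K A : Type*} [CommSemiring K] [Semiring A] [Algebra K A] {a b : A}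
    (h : Commute a b) (p : K[X]) : Commute a (aeval b p) :=
  Algebra.commute_of_mem_adjoin_singleton_of_commute (aeval_mem_adjoin_singleton _ _) h

/-! ### The endomorphism `f - f⁻¹` -/

section NegInvRing

variable {A : Type*} [Ring A] {u : Aˣ} {g : A}

lemma mul_eq_neg_inv_mul (h : u * g * u = -g) : g * u = -↑u⁻¹ * g := by
  rw [neg_mul, ← mul_neg, ← h, mul_assoc, Units.inv_mul_cancel_left]

lemma commute_sub_inv_of_mul_mul_eq_neg (h : u * g * u = -g) : Commute g (u - ↑u⁻¹ : A) := by
  have hinv : g * ↑u⁻¹ = -(u * g) := by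
    rw [← neg_mul, eq_comm, ← Units.mul_inv_eq_iff_eq_mul]
    simpa [neg_mul] using (neg_eq_iff_eq_neg.2 h)
  rw [commute_iff_eq, mul_sub, sub_mul, mul_eq_neg_inv_mul h, hinv]
  noncomm_ring

end NegInvRing

lemma isUnit_of_mul_mul_eq_neg {D V : Type*} [DivisionRing D] [AddCommGroup V] [Module D V]
    [Module.Finite D V] {f g : End D V} (h : f * g * f = -g)
    (hg : Function.Injective g) : IsUnit f := by
  rw [LinearMap.isUnit_iff_ker_eq_bot, LinearMap.ker_eq_bot']
  intro v hv
  apply hg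
  rw [map_zero, ← neg_eq_zero, ← LinearMap.neg_apply, ← h, Module.End.mul_apply, hv, map_zero]

section NegInvEnd

variable {D V : Type*} [DivisionRing D] [AddCommGroup V] [Module D V] [Module ℝ V] [SMul ℝ D]
  [IsScalarTower ℝ D V] [SMulCommClass D ℝ V] {u : (End D V)ˣ} {g : End D V} {lam : ℂ}

lemma ne_zero_of_ker_aeval_realQuadratic_ne_bot
    (hlam : LinearMap.ker (aeval (u : End D V) (realQuadratic lam)) ≠ ⊥) : lam ≠ 0 := by
  rintro rfl
  have hunit : IsUnit (aeval (u : End D V) (realQuadratic 0)) := by simp [realQuadratic]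
  exact hlam (LinearMap.ker_eq_bot.2 ((Module.End.isUnit_iff _).1 hunit).injective)

lemma ker_aeval_sub_inv_ne_bot (h₀ : lam ≠ 0)
    (hlam : LinearMap.ker (aeval (u : End D V) (realQuadratic lam)) ≠ ⊥) :
    LinearMap.ker (aeval (u - ↑u⁻¹ : End D V) (realQuadratic (lam - lam⁻¹))) ≠ ⊥ := by
  obtain ⟨v, hv, hv0⟩ := (Submodule.ne_bot_iff _).1 hlam
  have hinj : Function.Injective ⇑((u : End D V) ^ 2) :=
    ((Module.End.isUnit_iff _).1 (u.isUnit.pow 2)).injective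
  refine (Submodule.ne_bot_iff _).2 ⟨((u : End D V) ^ 2) v, ?_, (map_ne_zero_iff _ hinj).2 hv0⟩
  rw [LinearMap.mem_ker, ← Module.End.mul_apply, aeval_sub_inv_mul_sq u h₀, mul_comm, map_mul,
    Module.End.mul_apply, LinearMap.mem_ker.1 hv, map_zero]

lemma apply_mem_ker_aeval_realQuadratic_pow (h₀ : lam ≠ 0) (h : u * g * u = -g) (N : ℕ) :
    ∀ v ∈ LinearMap.ker (aeval (u : End D V) (realQuadratic (-lam⁻¹) ^ N)),
      g v ∈ LinearMap.ker (aeval (u : End D V) (realQuadratic lam ^ N)) := by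
  intro v hv
  set c : End D V := Complex.normSq lam • (u : End D V) ^ 2
  set a : End D V := aeval (-↑u⁻¹ : End D V) (realQuadratic (-lam⁻¹))
  have hcu : Commute c (-↑u⁻¹) :=
    ((Units.commute_coe_inv u).neg_right.pow_left 2).smul_left _
  have hca : Commute a c := (commute_aeval hcu _).symm
  have hgu (x : V) : g ((u : End D V) x) = (-↑u⁻¹ : End D V) (g x) :=
    LinearMap.congr_fun (mul_eq_neg_inv_mul h) x
  have hgv : (a ^ N) (g v) = 0 := by
    rw [← map_pow, ← LinearMap.restrictScalars_apply ℝ g, ← map_aeval_apply _ hgu,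
      LinearMap.mem_ker.1 hv, map_zero]
  rw [LinearMap.mem_ker, map_pow, ← aeval_neg_inv_mul_smul_sq u h₀, hca.mul_pow,
    (hca.pow_pow N N).eq, Module.End.mul_apply, hgv, map_zero]

lemma exists_linearEquiv_ker_aeval_realQuadratic_pow [Module.Finite D V] (h₀ : lam ≠ 0)
    (h : u * g * u = -g) (hg : Function.Injective g) (N : ℕ) :
    ∃ e : LinearMap.ker (aeval (u : End D V) (realQuadratic lam ^ N)) ≃ₗ[D]
        LinearMap.ker (aeval (u : End D V) (realQuadratic (-lam⁻¹) ^ N)),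
      ∀ x, (e x : V) = g x := by
  have hmaps := apply_mem_ker_aeval_realQuadratic_pow (neg_ne_zero.2 (inv_ne_zero h₀)) h N
  rw [inv_neg, inv_inv, neg_neg] at hmaps
  have hmaps' := apply_mem_ker_aeval_realQuadratic_pow h₀ h N
  have hinj : Function.Injective (g.restrict hmaps) := fun x y hxy =>
    Subtype.ext (hg (congrArg Subtype.val hxy))
  have hinj' : Function.Injective (g.restrict hmaps') := fun x y hxy =>
    Subtype.ext (hg (congrArg Subtype.val hxy))
  have hdim := (LinearMap.finrank_le_finrank_of_injective hinj).antisymm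
    (LinearMap.finrank_le_finrank_of_injective hinj')
  exact ⟨LinearEquiv.ofInjectiveOfFinrankEq (g.restrict hmaps) hinj hdim, fun _ => rfl⟩

end NegInvEnd

/-! ### Quaternionic endomorphisms with one conjugacy class of eigenvalues -/

section Quaternion

open ComplexConjugate

/-- The ring homomorphism with underlying function `C2H`. -/
def C2Hhom : ℂ →+* ℍ := (Quaternion.ofComplex : ℂ →ₐ[ℝ] ℍ)

/-- The quaternion unit `j`. -/
def quatJ : ℍ := ⟨0, 0, 1, 0⟩

lemma quatJ_mul_quatJ : quatJ * quatJ = -1 := by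
  ext <;> simp only [Quaternion.re_mul, Quaternion.imI_mul, Quaternion.imJ_mul, Quaternion.imK_mul,
    Quaternion.re_neg, Quaternion.imI_neg, Quaternion.imJ_neg, Quaternion.imK_neg,
    Quaternion.re_one, Quaternion.imI_one, Quaternion.imJ_one, Quaternion.imK_one] <;>
    simp [quatJ]

lemma quatJ_mul_C2H (z : ℂ) : quatJ * C2H z = C2H (conj z) * quatJ := by
  ext <;> simp only [Quaternion.re_mul, Quaternion.imI_mul, Quaternion.imJ_mul,
    Quaternion.imK_mul] <;> simp [quatJ, C2H]

lemma C2H_qc1_add_quatJ_mul (q : ℍ) : C2H (qc1 q) + quatJ * C2H (conj (qc2 q)) = q := by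
  ext <;> simp only [Quaternion.re_add, Quaternion.imI_add, Quaternion.imJ_add, Quaternion.imK_add,
    Quaternion.re_mul, Quaternion.imI_mul, Quaternion.imJ_mul, Quaternion.imK_mul] <;>
    simp [quatJ, C2H, qc1, qc2]

/-- The complex structure on `ℍ` by left multiplication; Mathlib has no such instance, as there are
two choices for the side of the multiplication. -/
local instance : Module ℂ ℍ := Module.compHom ℍ C2Hhom

local instance : IsScalarTower ℝ ℂ ℍ := ⟨fun r z q => by
  change C2Hhom (r • z) * q = r • (C2Hhom z * q)
  rw [show C2Hhom (r • z) = r • C2Hhom z from map_smul Quaternion.ofComplex r z, smul_mul_assoc]⟩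

local instance : Module.Finite ℂ ℍ := .of_restrictScalars_finite ℝ ℂ ℍ

lemma quatJ_smul_quatJ_smul {V : Type*} [AddCommGroup V] [Module ℍ V] (v : V) :
    quatJ • quatJ • v = -v := by
  rw [smul_smul, quatJ_mul_quatJ, neg_one_smul]

section ComplexStructure

variable {V : Type*} [AddCommGroup V] [Module ℍ V] [Module ℂ V] [IsScalarTower ℂ ℍ V]

lemma C2H_smul (z : ℂ) (v : V) : C2H z • v = z • v := by
  rw [← smul_one_smul ℍ z v]
  congr 1
  exact (mul_one (C2H z)).symm

lemma quatJ_smul_smul (z : ℂ) (v : V) : quatJ • z • v = conj z • quatJ • v := by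
  rw [← C2H_smul, ← C2H_smul, smul_smul, smul_smul, quatJ_mul_C2H]

lemma qc1_smul_add_quatJ_smul (q : ℍ) (v : V) :
    qc1 q • v + quatJ • conj (qc2 q) • v = q • v := by
  rw [← C2H_smul, ← C2H_smul, smul_smul, ← add_smul, C2H_qc1_add_quatJ_mul]

lemma linearIndependent_quaternion_of_disjoint {ι : Type*} {W W' : Submodule ℂ V}
    (hWW' : Disjoint W W') (hW : ∀ v ∈ W, quatJ • v ∈ W') {b : ι → W}
    (hb : LinearIndependent ℂ b) : LinearIndependent ℍ fun i => (b i : V) := by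
  rw [linearIndependent_iff'] at hb ⊢
  intro s q hq
  set x := ∑ i ∈ s, qc1 (q i) • b i with hx
  set y := ∑ i ∈ s, conj (qc2 (q i)) • b i with hy
  have hsum : (x : V) + quatJ • (y : V) = 0 := by
    simp [hx, hy, Finset.smul_sum, ← Finset.sum_add_distrib, qc1_smul_add_quatJ_smul, hq]
  have hx0 : (x : V) = 0 := Submodule.disjoint_def.1 hWW' _ x.2 <| by
    rw [eq_neg_of_add_eq_zero_left hsum]
    exact W'.neg_mem (hW y y.2)
  have hy0 : (y : V) = 0 := by
    rw [hx0, zero_add] at hsum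
    rw [← neg_eq_zero, ← quatJ_smul_quatJ_smul, hsum, smul_zero]
  intro i hi
  have h₁ : qc1 (q i) = 0 := hb s _ (Subtype.ext hx0) i hi
  have h₂ : conj (qc2 (q i)) = 0 := hb s _ (Subtype.ext hy0) i hi
  rw [← C2H_qc1_add_quatJ_mul (q i), h₁, h₂]
  change C2Hhom 0 + quatJ * C2Hhom 0 = 0
  simp

lemma exists_basis_quaternion_of_isCompl {ι : Type*} {W W' : Submodule ℂ V}
    (hWW' : IsCompl W W') (hW : ∀ v ∈ W, quatJ • v ∈ W') (hW' : ∀ v ∈ W', quatJ • v ∈ W)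
    (b : Basis ι ℂ W) : ∃ b' : Basis ι ℍ V, ∀ i, b' i = b i := by
  have hspan (w : V) (hw : w ∈ W) : w ∈ Submodule.span ℍ (Set.range fun i => (b i : V)) := by
    lift w to W using hw
    rw [← b.linearCombination_repr w, Finsupp.linearCombination_apply, Finsupp.sum,
      Submodule.coe_sum]
    refine Submodule.sum_mem _ fun i _ => ?_
    rw [Submodule.coe_smul, ← C2H_smul]
    exact Submodule.smul_mem _ _ (Submodule.subset_span ⟨i, rfl⟩)
  have hli := linearIndependent_quaternion_of_disjoint hWW'.disjoint hW b.linearIndependent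
  refine ⟨.mk hli fun v _ => ?_, fun i => by rw [Basis.mk_apply]⟩
  obtain ⟨w, hw, w', hw', rfl⟩ := Submodule.mem_sup.1 (hWW'.codisjoint.eq_top ▸ Submodule.mem_top :
    v ∈ W ⊔ W')
  have hw'_eq : w' = -(quatJ • quatJ • w') := by rw [quatJ_smul_quatJ_smul, neg_neg]
  rw [hw'_eq]
  exact add_mem (hspan w hw) (neg_mem (Submodule.smul_mem _ _ (hspan _ (hW' w' hw'))))

lemma quatJ_smul_mem_ker_sub_pow (f : V →ₗ[ℍ] V) (z : ℂ) (N : ℕ) :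
    ∀ v ∈ LinearMap.ker (aeval (f.restrictScalars ℂ : End ℂ V) ((X - C z) ^ N)),
      quatJ • v ∈
        LinearMap.ker (aeval (f.restrictScalars ℂ : End ℂ V) ((X - C (conj z)) ^ N)) := by
  have hJ (x : V) : quatJ • aeval (f.restrictScalars ℂ : End ℂ V) (X - C z) x =
      aeval (f.restrictScalars ℂ : End ℂ V) (X - C (conj z)) (quatJ • x) := by
    simp [smul_sub, quatJ_smul_smul]
  induction N with
  | zero => simp
  | succ N ih =>
    intro v hv
    rw [pow_succ, map_mul, LinearMap.mem_ker, Module.End.mul_apply] at hv ⊢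
    rw [← hJ]
    exact ih _ hv

variable [Module ℝ V] [IsScalarTower ℝ ℍ V] {f : V →ₗ[ℍ] V} {z : ℂ}

local instance isScalarTower_real_complex : IsScalarTower ℝ ℂ V := .to₁₂₄ ℝ ℂ ℍ V

local instance smulCommClass_quaternion_real : SMulCommClass ℍ ℝ V :=
  IsScalarTower.to_smulCommClass'

lemma aeval_restrictScalars_map (p : ℝ[X]) (v : V) :
    aeval (f.restrictScalars ℂ : End ℂ V) (p.map (algebraMap ℝ ℂ)) v = aeval f p v := by
  rw [aeval_map_algebraMap]
  exact (map_aeval_apply (f := f) (f' := f.restrictScalars ℂ) (.id : V →ₗ[ℝ] V) (fun _ => rfl)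
    p v).symm

lemma exists_hasMatrix_jordanList_of_im_ne_zero [Module.Finite ℍ V] (hz : z.im ≠ 0) {N : ℕ}
    (hf : aeval f (realQuadratic z ^ N) = 0) :
    ∃ ss : List ℕ, (∀ s ∈ ss, 1 ≤ s) ∧ HasMatrix C2Hhom f (dsum (jordanList z ss)).2 := by
  have : Module.Finite ℂ V := .trans ℍ V
  set F : End ℂ V := f.restrictScalars ℂ
  have hcop : IsCoprime ((X - C z) ^ N) ((X - C (conj z)) ^ N) := by
    refine IsCoprime.pow (isCoprime_X_sub_C_of_isUnit_sub (IsUnit.mk0 _ fun h => hz ?_))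
    exact Complex.conj_eq_iff_im.1 (sub_eq_zero.1 h).symm
  have hzero : aeval F ((X - C z) ^ N * (X - C (conj z)) ^ N) = 0 := by
    rw [← mul_pow, ← map_realQuadratic, ← Polynomial.map_pow]
    ext v
    rw [aeval_restrictScalars_map, hf, LinearMap.zero_apply, LinearMap.zero_apply]
  have hW := quatJ_smul_mem_ker_sub_pow f z N
  have hW' := quatJ_smul_mem_ker_sub_pow f (conj z) N
  rw [Complex.conj_conj] at hW'
  have hF : ∀ v ∈ LinearMap.ker (aeval F ((X - C z) ^ N)),
      F v ∈ LinearMap.ker (aeval F ((X - C z) ^ N)) :=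
    apply_mem_ker_of_commute (commute_aeval (.refl F) _)
  have hnil : IsNilpotent (aeval (F.restrict hF) (X - C z)) := by
    refine ⟨N, ?_⟩
    rw [← map_pow, aeval_restrict_eq_zero hF fun v hv => hv]
  obtain ⟨ss, hss, b, hb⟩ :=
    exists_hasMatrix_jordanList (f := F.restrict hF) (.id ℂ) z hnil (by simp)
  obtain ⟨b', hb'⟩ :=
    exists_basis_quaternion_of_isCompl (isCompl_ker_aeval_of_isCoprime hcop hzero) hW hW' b
  refine ⟨ss, hss, b', fun i => ?_⟩
  simp only [hb']
  refine (congrArg Subtype.val (hb i)).trans ?_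
  rw [Submodule.coe_sum]
  exact Finset.sum_congr rfl fun j _ => (C2H_smul _ _).symm

lemma exists_mem_ker_aeval_realQuadratic [Module.Finite ℍ V] [Nontrivial V] (f : V →ₗ[ℍ] V) :
    ∃ z : ℂ, 0 ≤ z.im ∧ LinearMap.ker (aeval f (realQuadratic z)) ≠ ⊥ := by
  have : Module.Finite ℂ V := .trans ℍ V
  obtain ⟨z, hz⟩ := Module.End.exists_eigenvalue (f.restrictScalars ℂ)
  obtain ⟨v, hv⟩ := hz.exists_hasEigenvector
  have hker : LinearMap.ker (aeval f (realQuadratic z)) ≠ ⊥ := by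
    refine (Submodule.ne_bot_iff _).2 ⟨v, ?_, hv.2⟩
    rw [LinearMap.mem_ker, ← aeval_restrictScalars_map, map_realQuadratic, mul_comm, map_mul,
      Module.End.mul_apply]
    have : aeval (f.restrictScalars ℂ : End ℂ V) (X - C z) v = 0 := by
      simpa [sub_eq_zero] using hv.apply_eq_smul
    rw [this, map_zero]
  rcases le_total 0 z.im with him | him
  · exact ⟨z, him, hker⟩
  · exact ⟨conj z, by simpa using him, by simpa [realQuadratic] using hker⟩

end ComplexStructure

section PrimaryComponent

variable {V : Type*} [AddCommGroup V] [Module ℍ V] [Module ℝ V] [IsScalarTower ℝ ℍ V]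
  [Module.Finite ℍ V] {f : V →ₗ[ℍ] V} {z : ℂ} {N : ℕ}

lemma exists_hasMatrix_jordanList_of_im_eq_zero (hz : z.im = 0)
    (hf : aeval f (realQuadratic z ^ N) = 0) :
    ∃ ss : List ℕ, (∀ s ∈ ss, 1 ≤ s) ∧ HasMatrix C2Hhom f (dsum (jordanList z ss)).2 := by
  have hsq : realQuadratic z = (X - C z.re) ^ 2 := by
    simp only [realQuadratic, Complex.normSq_apply, hz, map_mul, map_ofNat, mul_zero, add_zero]
    ring
  refine exists_hasMatrix_jordanList (N := aeval f (X - C z.re)) C2Hhom z ⟨2 * N, ?_⟩ fun v => ?_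
  · rw [← map_pow, pow_mul, ← hsq, hf]
  · have hsmul : C2Hhom z • v = z.re • v := by
      rw [← Complex.re_add_im z, hz, Complex.ofReal_zero, zero_mul, add_zero, Complex.ofReal_re]
      exact algebraMap_smul ℍ z.re v
    simp [hsmul]

theorem exists_hasMatrix_jordanList_of_aeval_realQuadratic
    (hf : aeval f (realQuadratic z ^ N) = 0) :
    ∃ ss : List ℕ, (∀ s ∈ ss, 1 ≤ s) ∧ HasMatrix C2Hhom f (dsum (jordanList z ss)).2 := by
  by_cases hz : z.im = 0
  · exact exists_hasMatrix_jordanList_of_im_eq_zero hz hf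
  · let : Module ℂ V := Module.compHom V C2Hhom
    have : IsScalarTower ℂ ℍ V := ⟨fun w q v => mul_smul (C2Hhom w) q v⟩
    exact exists_hasMatrix_jordanList_of_im_ne_zero hz hf

theorem exists_ker_aeval_realQuadratic_ne_bot [Nontrivial V] (f : V →ₗ[ℍ] V) :
    ∃ z : ℂ, 0 ≤ z.im ∧ LinearMap.ker (aeval f (realQuadratic z)) ≠ ⊥ := by
  let : Module ℂ V := Module.compHom V C2Hhom
  have : IsScalarTower ℂ ℍ V := ⟨fun w q v => mul_smul (C2Hhom w) q v⟩
  exact exists_mem_ker_aeval_realQuadratic f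

end PrimaryComponent

end Quaternion

/-! ### The normal form -/

section NormalForm

variable {V : Type*} [AddCommGroup V] [Module ℍ V] [Module ℝ V] [IsScalarTower ℝ ℍ V]
  [Module.Finite ℍ V]

lemma exists_hasMatrix_dsum_of_aeval_mul_pow_eq_zero {f : (End ℍ V)ˣ} {g : End ℍ V} {lam : ℂ}
    {N : ℕ} (h₀ : lam ≠ 0) (him : 0 ≤ lam.im) (h : f * g * f = -g) (hg : Function.Injective g)
    (hf : aeval (f : End ℍ V) ((realQuadratic lam * realQuadratic (-lam⁻¹)) ^ N) = 0) :
    ∃ L : List Block, (∀ b ∈ L, IsAdmissibleBlock b) ∧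
      HasMatrix C2Hhom (f : End ℍ V) (dsum L).2 := by
  by_cases hI : lam = Complex.I
  · subst hI
    rw [Complex.inv_I, neg_neg, ← pow_two, ← pow_mul] at hf
    obtain ⟨ss, hss, hM⟩ := exists_hasMatrix_jordanList_of_aeval_realQuadratic hf
    refine ⟨jordanList Complex.I ss, fun b hb => ?_, hM⟩
    obtain ⟨s, hs, rfl⟩ := List.mem_map.1 hb
    exact .inr ⟨s, hss s hs, rfl⟩
  · have hcop := (isCoprime_realQuadratic_neg_inv h₀ him hI).pow (m := N) (n := N)
    rw [mul_pow] at hf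
    have hmaps (P : ℝ[X]) : ∀ v ∈ LinearMap.ker (aeval (f : End ℍ V) P),
        (f : End ℍ V) v ∈ LinearMap.ker (aeval (f : End ℍ V) P) :=
      apply_mem_ker_of_commute (commute_aeval (.refl _) P)
    obtain ⟨ss, hss, hM⟩ := exists_hasMatrix_jordanList_of_aeval_realQuadratic
      (aeval_restrict_eq_zero (hmaps (realQuadratic lam ^ N)) fun v hv => hv)
    obtain ⟨e, he⟩ := exists_linearEquiv_ker_aeval_realQuadratic_pow h₀ h hg N
    have hrel := isConjNegInv_dsum_jordanList (neg_ne_zero.2 (inv_ne_zero h₀)) ss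
    rw [inv_neg, inv_inv, neg_neg] at hrel
    have hM' := hM.of_isConjNegInv hrel (f' := (f : End ℍ V).restrict (hmaps _)) e fun v => by
      apply Subtype.ext
      simpa [he] using LinearMap.congr_fun h (v : V)
    refine ⟨ss.map (jordanPair lam), fun b hb => ?_,
      (HasMatrix.fromBlocks (isCompl_ker_aeval_of_isCoprime hcop hf) _ _ hM hM').of_isReindexing
        (isReindexing_dsum_map_jordanPair lam ss)⟩
    obtain ⟨s, hs, rfl⟩ := List.mem_map.1 hb
    exact .inl ⟨s, lam, hss s hs, h₀, him, hI, rfl⟩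

lemma exists_isCompl_aeval_mul_pow_eq_zero [Nontrivial V] {f : (End ℍ V)ˣ} {g : End ℍ V}
    (h : f * g * f = -g) :
    ∃ (lam : ℂ) (N : ℕ) (p q : Submodule ℍ V), lam ≠ 0 ∧ 0 ≤ lam.im ∧ IsCompl p q ∧ p ≠ ⊥ ∧
      (∀ x ∈ p, (f : End ℍ V) x ∈ p) ∧ (∀ x ∈ p, g x ∈ p) ∧
      (∀ x ∈ q, (f : End ℍ V) x ∈ q) ∧ (∀ x ∈ q, g x ∈ q) ∧
      ∀ x ∈ p, aeval (f : End ℍ V) ((realQuadratic lam * realQuadratic (-lam⁻¹)) ^ N) x = 0 := by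
  obtain ⟨lam, him, hlam⟩ := exists_ker_aeval_realQuadratic_ne_bot (f : End ℍ V)
  have h₀ : lam ≠ 0 := ne_zero_of_ker_aeval_realQuadratic_ne_bot hlam
  set Q : End ℍ V := aeval (f - ↑f⁻¹ : End ℍ V) (realQuadratic (lam - lam⁻¹))
  have hQ : Q * (f : End ℍ V) ^ 2 = _ := aeval_sub_inv_mul_sq f h₀
  have hfQ : Commute (f : End ℍ V) Q :=
    commute_aeval (.sub_right (.refl _) (Units.commute_coe_inv f)) _
  have hgQ : Commute g Q := commute_aeval (commute_sub_inv_of_mul_mul_eq_neg h) _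
  obtain ⟨N, hcompl, hN⟩ := ((LinearMap.eventually_isCompl_ker_pow_range_pow Q).and
    (Filter.eventually_ge_atTop 1)).exists
  refine ⟨lam, N, _, _, h₀, him, hcompl, ?_, apply_mem_ker_of_commute (hfQ.pow_right N),
    apply_mem_ker_of_commute (hgQ.pow_right N), apply_mem_range_of_commute (hfQ.pow_right N),
    apply_mem_range_of_commute (hgQ.pow_right N), fun x hx => ?_⟩
  · refine ne_bot_of_le_ne_bot (ker_aeval_sub_inv_ne_bot h₀ hlam) fun x hx => ?_
    rw [LinearMap.mem_ker, ← Nat.sub_add_cancel hN, pow_succ, Module.End.mul_apply,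
      LinearMap.mem_ker.1 hx, map_zero]
  · rw [map_pow, ← hQ, (hfQ.symm.pow_right 2).mul_pow, ((hfQ.symm.pow_right 2).pow_pow N N).eq,
      Module.End.mul_apply, LinearMap.mem_ker.1 hx, map_zero]

theorem exists_hasMatrix_dsum_of_mul_mul_eq_neg {f g : End ℍ V} (h : f * g * f = -g)
    (hg : Function.Injective g) :
    ∃ L : List Block, (∀ b ∈ L, IsAdmissibleBlock b) ∧ HasMatrix C2Hhom f (dsum L).2 := by
  induction hd : finrank ℍ V using Nat.strong_induction_on generalizing V with
  | _ d ih =>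
    rcases subsingleton_or_nontrivial V with hV | hV
    · exact ⟨[], by simp, hasMatrix_of_isEmpty (ι := Fin 0)⟩
    obtain ⟨f, rfl⟩ := isUnit_of_mul_mul_eq_neg h hg
    obtain ⟨lam, N, p, q, h₀, him, hpq, hp0, hfp, hgp, hfq, hgq, hN⟩ :=
      exists_isCompl_aeval_mul_pow_eq_zero h
    have hrestrict {r : Submodule ℍ V} (hfr : ∀ x ∈ r, (f : End ℍ V) x ∈ r)
        (hgr : ∀ x ∈ r, g x ∈ r) :
        (f : End ℍ V).restrict hfr * g.restrict hgr * (f : End ℍ V).restrict hfr =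
          -g.restrict hgr ∧ Function.Injective (g.restrict hgr) :=
      ⟨LinearMap.ext fun x => Subtype.ext (LinearMap.congr_fun h (x : V)),
        fun x y hxy => Subtype.ext (hg (congrArg Subtype.val hxy))⟩
    have hdim : finrank ℍ q < d := by
      rw [← hd, ← Submodule.finrank_add_eq_of_isCompl hpq]
      exact Nat.lt_add_of_pos_left (Submodule.one_le_finrank_iff.2 hp0)
    obtain ⟨hp, hgp_inj⟩ := hrestrict hfp hgp
    obtain ⟨hq, hgq_inj⟩ := hrestrict hfq hgq
    obtain ⟨fp, hfp_eq⟩ := isUnit_of_mul_mul_eq_neg hp hgp_inj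
    obtain ⟨L, hL, hM⟩ : ∃ L : List Block, (∀ b ∈ L, IsAdmissibleBlock b) ∧
        HasMatrix C2Hhom ((f : End ℍ V).restrict hfp) (dsum L).2 := by
      rw [← hfp_eq] at hp ⊢
      refine exists_hasMatrix_dsum_of_aeval_mul_pow_eq_zero (N := N) h₀ him hp hgp_inj ?_
      rw [hfp_eq]
      exact aeval_restrict_eq_zero hfp hN
    obtain ⟨L', hL', hM'⟩ := ih _ hdim hq hgq_inj rfl
    refine ⟨L ++ L', fun b hb => (List.mem_append.1 hb).elim (hL b) (hL' b), ?_⟩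
    exact (HasMatrix.fromBlocks hpq hfp hfq hM hM').of_isReindexing
      (isReindexing_dsum_append L L')

end NormalForm

/-! ### Quaternionic matrices -/

section QuaternionMatrix

open ComplexConjugate

lemma map_C2H_mul {l m n : Type*} [Fintype m] (M : Matrix l m ℂ) (N : Matrix m n ℂ) :
    (M * N).map C2H = M.map C2H * N.map C2H :=
  Matrix.map_mul (f := C2Hhom)

lemma map_C2H_one {m : Type*} [DecidableEq m] : (1 : Matrix m m ℂ).map C2H = 1 :=
  Matrix.map_one C2Hhom (map_zero _) (map_one _)

lemma map_C2H_neg {m n : Type*} (M : Matrix m n ℂ) : (-M).map C2H = -M.map C2H :=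
  Matrix.ext fun i j => map_neg C2Hhom (M i j)

lemma qc1_mul (p q : ℍ) : qc1 (p * q) = qc1 p * qc1 q - qc2 p * conj (qc2 q) := by
  apply Complex.ext <;> simp [qc1, qc2] <;> ring

lemma qc2_mul (p q : ℍ) : qc2 (p * q) = qc1 p * qc2 q + qc2 p * conj (qc1 q) := by
  apply Complex.ext <;> simp [qc1, qc2] <;> ring

lemma qc1_sum {ι : Type*} (s : Finset ι) (q : ι → ℍ) : qc1 (∑ i ∈ s, q i) = ∑ i ∈ s, qc1 (q i) :=
  map_sum (AddMonoidHom.mk' qc1 fun p q => by apply Complex.ext <;> simp [qc1]) q s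

lemma qc2_sum {ι : Type*} (s : Finset ι) (q : ι → ℍ) : qc2 (∑ i ∈ s, q i) = ∑ i ∈ s, qc2 (q i) :=
  map_sum (AddMonoidHom.mk' qc2 fun p q => by apply Complex.ext <;> simp [qc2]) q s

variable {ι : Type*} [Fintype ι]

lemma Phi_mul (A B : Matrix ι ι ℍ) : Phi (A * B) = Phi A * Phi B := by
  rw [Phi, Phi, Phi, fromBlocks_multiply]
  refine fromBlocks_inj.2 ⟨?_, ?_, ?_, ?_⟩ <;> ext i j <;>
    simp only [mul_apply, map_apply, Matrix.neg_apply, Matrix.add_apply, qc1_sum, qc2_sum, qc1_mul,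
      qc2_mul, map_sum, map_sub, map_add, map_mul, Complex.conj_conj, ← Finset.sum_add_distrib,
      ← Finset.sum_neg_distrib] <;>
    exact Finset.sum_congr rfl fun k _ => by ring

variable [DecidableEq ι]

lemma qdet_mul (A B : Matrix ι ι ℍ) : qdet (A * B) = qdet A * qdet B := by
  rw [qdet, Phi_mul, det_mul, qdet, qdet]

lemma qdet_map_C2H (M : Matrix ι ι ℂ) : qdet (M.map C2H) = M.det * conj M.det := by
  have hPhi : Phi (M.map C2H) = fromBlocks M 0 0 (M.map conj) := by
    rw [Phi]
    refine fromBlocks_inj.2 ⟨rfl, rfl, Matrix.ext fun i j => ?_, rfl⟩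
    exact neg_eq_zero.2 (map_zero (starRingEnd ℂ))
  rw [qdet, hPhi, det_fromBlocks_zero₁₂, RingHom.map_det]
  rfl

lemma qdet_one : qdet (1 : Matrix ι ι ℍ) = 1 := by
  rw [← map_C2H_one, qdet_map_C2H, det_one, one_mul, map_one]

lemma exists_qdet_eq_one_of_map_C2H {M : Matrix ι ι ℂ} (hM : IsConjNegInv M M)
    {B : (Matrix ι ι ℍ)ˣ} (hB : B.val = M.map C2H) :
    ∃ g : (Matrix ι ι ℍ)ˣ, qdet g.val = 1 ∧ B * g * B = -g := by
  obtain ⟨h, hdet, hMh⟩ := hM.exists_det_eq_one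
  have hunit : IsUnit h.det := hdet ▸ isUnit_one
  refine ⟨⟨h.map C2H, h⁻¹.map C2H, ?_, ?_⟩, ?_, Units.ext ?_⟩
  · rw [← map_C2H_mul, mul_nonsing_inv h hunit, map_C2H_one]
  · rw [← map_C2H_mul, nonsing_inv_mul h hunit, map_C2H_one]
  · rw [qdet_map_C2H, hdet, map_one, one_mul]
  · rw [Units.val_mul, Units.val_mul, hB, ← map_C2H_mul, ← map_C2H_mul, hMh, map_C2H_neg,
      Units.val_neg]

end QuaternionMatrix

section Conj

variable {G : Type*} [Group G] [HasDistribNeg G]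

lemma conj_eq_neg_inv_iff {g a : G} : g * a * g⁻¹ = -a⁻¹ ↔ a * g * a = -g := by
  rw [mul_inv_eq_iff_eq_mul, neg_mul, ← mul_right_inj a, mul_neg, mul_inv_cancel_left, mul_assoc]

lemma mul_conj_mul_eq_neg {s a h : G} (hh : s * a * s⁻¹ * h * (s * a * s⁻¹) = -h) :
    a * (s⁻¹ * h * s) * a = -(s⁻¹ * h * s) := by
  have : a * (s⁻¹ * h * s) * a = s⁻¹ * (s * a * s⁻¹ * h * (s * a * s⁻¹)) * s := by group
  rw [this, hh, mul_neg, neg_mul]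

end Conj

lemma HasMatrix.exists_conj_eq_map {D ι κ : Type*} [DivisionRing D] [Fintype ι] [DecidableEq ι]
    [Fintype κ] {φ : ℂ →+* D} {A : Matrix ι ι D} {M : Matrix κ κ ℂ}
    (h : HasMatrix φ A.toLinearMapRight' M) :
    ∃ (e : κ ≃ ι) (S : (Matrix ι ι D)ˣ), S.val * A * S⁻¹.val = (reindex e e M).map φ := by
  obtain ⟨b, hb⟩ := h
  set e := b.indexEquiv (Pi.basisFun D ι)
  obtain ⟨E, hE⟩ := hasMatrix_iff_exists_linearEquiv.1
    (HasMatrix.of_isReindexing ⟨b, hb⟩ ⟨e, rfl⟩ : HasMatrix φ _ (reindex e e M))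
  have hinv : E.toLinearMap.toMatrixRight' * E.symm.toLinearMap.toMatrixRight' = 1 := by
    rw [← LinearMap.toMatrixRight'_comp, E.symm_comp, LinearMap.toMatrixRight'_id]
  have hinv' : E.symm.toLinearMap.toMatrixRight' * E.toLinearMap.toMatrixRight' = 1 := by
    rw [← LinearMap.toMatrixRight'_comp, E.comp_symm, LinearMap.toMatrixRight'_id]
  refine ⟨e, ⟨_, _, hinv, hinv'⟩, (Units.mul_inv_eq_iff_eq_mul _).2 ?_⟩
  apply toLinearMapRight'.injective
  rw [toLinearMapRight'_mul, toLinearMapRight'_mul]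
  refine LinearMap.ext fun x => ?_
  rw [LinearEquiv.symm_apply_apply]
  exact hE x

theorem conj_to_neg_inv_iff_jordan_general {ι : Type*} [Fintype ι] [DecidableEq ι]
    (A : (Matrix ι ι ℍ)ˣ) :
    List.TFAE [
      ∃ g : (Matrix ι ι ℍ)ˣ, g * A * g⁻¹ = -A⁻¹,
      ∃ g : (Matrix ι ι ℍ)ˣ, qdet g.val = 1 ∧ g * A * g⁻¹ = -A⁻¹,
      ∃ L : List Block, (∀ b ∈ L, IsAdmissibleBlock b) ∧
        ∃ (e : Fin (dsum L).1 ≃ ι) (S : (Matrix ι ι ℍ)ˣ),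
          S.val * A.val * S⁻¹.val = (reindex e e (dsum L).2).map C2H] := by
  simp only [conj_eq_neg_inv_iff]
  tfae_have 2 → 1 := fun ⟨g, _, hg⟩ => ⟨g, hg⟩
  tfae_have 1 → 3 := by
    rintro ⟨g, hg⟩
    have hlin : A.val.toLinearMapRight' * g.val.toLinearMapRight' * A.val.toLinearMapRight' =
        -g.val.toLinearMapRight' := by
      simp only [Module.End.mul_eq_comp, ← toLinearMapRight'_mul, ← map_neg]
      rw [← mul_assoc, ← Units.val_mul, ← Units.val_mul, hg, Units.val_neg]
    have hinj : Function.Injective g.val.toLinearMapRight' :=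
      vecMul_injective_of_isUnit g.isUnit
    obtain ⟨L, hL, hM⟩ := exists_hasMatrix_dsum_of_mul_mul_eq_neg hlin hinj
    exact ⟨L, hL, hM.exists_conj_eq_map⟩
  tfae_have 3 → 2 := by
    rintro ⟨L, hL, e, S, hS⟩
    obtain ⟨h, hdet, hh⟩ := exists_qdet_eq_one_of_map_C2H
      ((isConjNegInv_dsum fun b hb => (hL b hb).isConjNegInv).reindex e e) (B := S * A * S⁻¹) hS
    refine ⟨S⁻¹ * h * S, ?_, mul_conj_mul_eq_neg hh⟩
    rw [Units.val_mul, Units.val_mul, qdet_mul, qdet_mul, hdet, mul_one, ← qdet_mul,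
      Units.inv_mul, qdet_one]
  tfae_finish

end

/-- `A ∈ SL(n, ℍ)` satisfies `g A g⁻¹ = -A⁻¹` for some `g ∈ SL(n, ℍ)` if and only if `A` is
conjugate in `GL(n, ℍ)` to a direct sum of pairs `J(λ, s) ⊕ J(-λ⁻¹, s)` (`λ ≠ 0`, `Im λ ≥ 0`,
`λ ≠ i`) and single blocks `J(i, t)`. -/
theorem conj_to_neg_inv_iff_jordan (n : ℕ) (A : (Matrix (Fin n) (Fin n) (Quaternion ℝ))ˣ)
    (hA : qdet A.val = 1) :
    (∃ g : (Matrix (Fin n) (Fin n) (Quaternion ℝ))ˣ, qdet g.val = 1 ∧ g * A * g⁻¹ = -A⁻¹) ↔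
      ∃ L : List ((m : ℕ) × Matrix (Fin m) (Fin m) ℂ),
        (∀ b ∈ L,
          (∃ (s : ℕ) (lam : ℂ), 1 ≤ s ∧ lam ≠ 0 ∧ 0 ≤ lam.im ∧ lam ≠ Complex.I ∧
            b = ⟨s + s, Matrix.reindex finSumFinEquiv finSumFinEquiv
                  (Matrix.fromBlocks (jordanC lam s) 0 0 (jordanC (-lam⁻¹) s))⟩) ∨
          (∃ t : ℕ, 1 ≤ t ∧ b = ⟨t, jordanC Complex.I t⟩)) ∧
        ∃ (e : Fin (dsum L).1 ≃ Fin n) (S : (Matrix (Fin n) (Fin n) (Quaternion ℝ))ˣ),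
          S.val * A.val * (S⁻¹).val = (Matrix.reindex e e (dsum L).2).map C2H :=
  (conj_to_neg_inv_iff_jordan_general A).out 1 2
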